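/- Let n, k be natural numbers with k ≥ 2, and let v : Fin k → ℤ^n with the subfamily (v α)_{α ≥ 2} ℚ-linearly independent and v 1 = ∑_{α = 2}^{k} v α. Then: (a) cone({v α : 2 ≤ α ≤ k}) = ⋃_{j = 2}^{k} cone({v 1} ∪ {v α : 2 ≤ α ≤ k, α ≠ j}); (b) if moreover the family (v α)_{α ≥ 2} is unimodular, then for every j with 2 ≤ j ≤ k the family {v 1} ∪ {v α : 2 ≤ α ≤ k, α ≠ j} is unimodular and generates the same subgroup of ℤ^n as (v α)_{α ≥ 2}. -/

import Mathlib

/-- The coercion of an integer lattice vector to a rational vector. -/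
def castQ {n : ℕ} (x : Fin n → ℤ) : Fin n → ℚ := fun j => (x j : ℚ)

/-- A family of lattice vectors is unimodular if it is `ℚ`-linearly independent and the
subgroup of `ℤ^n` it generates equals the set of all lattice points lying in its
`ℚ`-linear span. -/
def IsUnimodular {n : ℕ} {ι : Type*} (v : ι → Fin n → ℤ) : Prop :=
  LinearIndependent ℚ (fun i => castQ (v i)) ∧
  ∀ z : Fin n → ℤ,
    z ∈ Submodule.span ℤ (Set.range v) ↔
      castQ z ∈ Submodule.span ℚ (Set.range fun i => castQ (v i))

/-- The cone (set of all nonnegative rational linear combinations) generated by a set `S`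
of vectors in a `ℚ`-vector space. -/
def qCone {V : Type*} [AddCommMonoid V] [Module ℚ V] (S : Set V) : Set V :=
  {x | ∃ (t : Finset V) (c : V → ℚ), ↑t ⊆ S ∧ (∀ y ∈ t, 0 ≤ c y) ∧ x = ∑ y ∈ t, c y • y}

theorem qCone_zero' {V : Type*} [AddCommMonoid V] [Module ℚ V] (S : Set V) :
    (0 : V) ∈ qCone S := ⟨∅, 0, by simp, by simp, by simp⟩

theorem qCone_gen {V : Type*} [AddCommMonoid V] [Module ℚ V] {S : Set V} {x : V} (hx : x ∈ S) :
    x ∈ qCone S := ⟨{x}, 1, by simpa using hx, by simp, by simp⟩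

theorem qCone_smul {V : Type*} [AddCommMonoid V] [Module ℚ V] {S : Set V} {x : V} {a : ℚ}
    (ha : 0 ≤ a) (hx : x ∈ qCone S) : a • x ∈ qCone S := by
  obtain ⟨t, c, h1, h2, rfl⟩ := hx
  refine ⟨t, fun y => a * c y, h1, fun y hy => mul_nonneg ha (h2 y hy), ?_⟩
  simp [Finset.smul_sum, mul_smul]

theorem qCone_add {V : Type*} [AddCommMonoid V] [Module ℚ V] {S : Set V} {x y : V}
    (hx : x ∈ qCone S) (hy : y ∈ qCone S) : x + y ∈ qCone S := by
  classical
  obtain ⟨t, c, h1, h2, rfl⟩ := hx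
  obtain ⟨t', c', h1', h2', rfl⟩ := hy
  refine ⟨t ∪ t', fun y => (if y ∈ t then c y else 0) + (if y ∈ t' then c' y else 0), ?_, ?_, ?_⟩
  · intro z hz
    rcases Finset.mem_union.1 (Finset.mem_coe.1 hz) with h | h
    · exact h1 h
    · exact h1' h
  · intro z _
    apply add_nonneg
    · split_ifs with h
      · exact h2 z h
      · exact le_rfl
    · split_ifs with h
      · exact h2' z h
      · exact le_rfl
  · simp only [add_smul, Finset.sum_add_distrib]
    congr 1
    · rw [← Finset.sum_subset (Finset.subset_union_left (s₁ := t) (s₂ := t'))]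
      · exact Finset.sum_congr rfl fun z hz => by simp [hz]
      · intro z _ hz; simp [hz]
    · rw [← Finset.sum_subset (Finset.subset_union_right (s₁ := t) (s₂ := t'))]
      · exact Finset.sum_congr rfl fun z hz => by simp [hz]
      · intro z _ hz; simp [hz]

theorem qCone_sum {V ι : Type*} [AddCommMonoid V] [Module ℚ V] {S : Set V} (s : Finset ι)
    (f : ι → V) (h : ∀ i ∈ s, f i ∈ qCone S) : ∑ i ∈ s, f i ∈ qCone S :=
  Finset.sum_induction f (· ∈ qCone S) (fun _ _ => qCone_add) (qCone_zero' S) h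

theorem qCone_sub {V : Type*} [AddCommMonoid V] [Module ℚ V] {S T : Set V}
    (h : S ⊆ qCone T) : qCone S ⊆ qCone T := by
  rintro x ⟨t, c, h1, h2, rfl⟩
  exact qCone_sum _ _ fun y hy => qCone_smul (h2 y hy) (h (h1 hy))

theorem qCone_image {V ι : Type*} [AddCommMonoid V] [Module ℚ V] [DecidableEq ι]
    (f : ι → V) (s : Finset ι) {x : V}
    (hx : x ∈ qCone (f '' (s : Set ι))) :
    ∃ a : ι → ℚ, (∀ i, 0 ≤ a i) ∧ x = ∑ i ∈ s, a i • f i := by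
  obtain ⟨t, c, h1, h2, rfl⟩ := hx
  refine Finset.sum_induction _
    (fun x => ∃ a : ι → ℚ, (∀ i, 0 ≤ a i) ∧ x = ∑ i ∈ s, a i • f i) ?_ ?_ ?_
  · rintro _ _ ⟨a, ha, rfl⟩ ⟨b, hb, rfl⟩
    exact ⟨fun i => a i + b i, fun i => add_nonneg (ha i) (hb i), by
      simp [add_smul, Finset.sum_add_distrib]⟩
  · exact ⟨0, by simp, by simp⟩
  · intro y hy
    obtain ⟨i, hi, rfl⟩ := h1 hy
    refine ⟨fun k => if k = i then c (f i) else 0, fun k => ?_, ?_⟩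
    · dsimp only
      split_ifs
      · exact h2 _ hy
      · exact le_rfl
    · rw [Finset.sum_eq_single_of_mem i hi]
      · simp
      · intro b _ hb; simp [hb]

theorem span_star {R M : Type*} [Ring R] [AddCommGroup M] [Module R M] {m : ℕ}
    (w : Fin (m + 2) → M) (hsum : w 0 = ∑ α ∈ Finset.univ.erase 0, w α)
    (j : Fin (m + 2)) (hj : j ≠ 0) :
    Submodule.span R (Set.range (fun o : Option {α : Fin (m + 2) // α ≠ 0 ∧ α ≠ j} =>
          o.elim (w 0) (fun α => w (α : Fin (m + 2))))) =
        Submodule.span R (Set.range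
          (fun α : {α : Fin (m + 2) // α ≠ 0} => w (α : Fin (m + 2)))) := by
  apply le_antisymm
  · rw [Submodule.span_le]
    rintro _ ⟨o, rfl⟩
    cases o with
    | none =>
      simp only [Option.elim, SetLike.mem_coe]
      rw [hsum]
      exact Submodule.sum_mem _ fun α hα =>
        Submodule.subset_span ⟨⟨α, Finset.ne_of_mem_erase hα⟩, rfl⟩
    | some α => exact Submodule.subset_span ⟨⟨α.1, α.2.1⟩, rfl⟩
  · rw [Submodule.span_le]
    rintro _ ⟨⟨α, hα⟩, rfl⟩
    by_cases h : α = j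
    · subst h
      have : w α = w 0 - ∑ β ∈ (Finset.univ.erase 0).erase α, w β := by
        rw [hsum, ← Finset.add_sum_erase _ w (Finset.mem_erase.2 ⟨hα, Finset.mem_univ α⟩)]
        abel
      simp only [SetLike.mem_coe]
      rw [this]
      refine Submodule.sub_mem _ (Submodule.subset_span ⟨none, rfl⟩)
        (Submodule.sum_mem _ fun β hβ => Submodule.subset_span ⟨some ⟨β, ?_⟩, rfl⟩)
      simp only [Finset.mem_erase, Finset.mem_univ, and_true] at hβ
      exact ⟨hβ.2, hβ.1⟩
    · exact Submodule.subset_span ⟨some ⟨α, hα, h⟩, rfl⟩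

theorem card_star {m : ℕ} (j : Fin (m + 2)) (hj : j ≠ 0) :
    Fintype.card (Option {α : Fin (m + 2) // α ≠ 0 ∧ α ≠ j}) =
      Fintype.card {α : Fin (m + 2) // α ≠ 0} := by
  rw [Fintype.card_option, Fintype.card_subtype, Fintype.card_subtype]
  have h1 : (Finset.univ.filter fun α : Fin (m + 2) => α ≠ 0 ∧ α ≠ j) =
      (Finset.univ.filter fun α : Fin (m + 2) => α ≠ 0).erase j := by
    ext; simp [and_comm]
  rw [h1]
  exact Finset.card_erase_add_one (by simpa using hj)

/-- `k ≥ 2` is realized as `k = m + 2`; the distinguished index `1` of the paper is `0`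
here, so the subfamily indexed by `2 ≤ α ≤ k` becomes the subfamily with `α ≠ 0`. -/
theorem stmt11 {n m : ℕ} (v : Fin (m + 2) → Fin n → ℤ)
    (hindep : LinearIndependent ℚ
      (fun α : {α : Fin (m + 2) // α ≠ 0} => castQ (v α)))
    (hsum : v 0 = ∑ α ∈ Finset.univ.erase 0, v α) :
    -- (a)
    qCone ((fun α => castQ (v α)) '' {α | α ≠ 0}) =
      ⋃ j ∈ {α : Fin (m + 2) | α ≠ 0},
        qCone (insert (castQ (v 0)) ((fun α => castQ (v α)) '' {α | α ≠ 0 ∧ α ≠ j})) ∧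
    -- (b)
    (IsUnimodular (fun α : {α : Fin (m + 2) // α ≠ 0} => v (α : Fin (m + 2))) →
      ∀ j : Fin (m + 2), j ≠ 0 →
        IsUnimodular (fun o : Option {α : Fin (m + 2) // α ≠ 0 ∧ α ≠ j} =>
          o.elim (v 0) (fun α => v (α : Fin (m + 2)))) ∧
        Submodule.span ℤ (Set.range (fun o : Option {α : Fin (m + 2) // α ≠ 0 ∧ α ≠ j} =>
          o.elim (v 0) (fun α => v (α : Fin (m + 2))))) =
        Submodule.span ℤ (Set.range
          (fun α : {α : Fin (m + 2) // α ≠ 0} => v (α : Fin (m + 2))))) := by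
  have hsumQ : castQ (v 0) = ∑ α ∈ Finset.univ.erase 0, castQ (v α) := by
    rw [hsum]
    ext i
    simp [castQ, Finset.sum_apply]
  have hset : {α : Fin (m + 2) | α ≠ 0} = ((Finset.univ.erase 0 : Finset (Fin (m + 2))) : Set _) := by
    ext; simp
  refine ⟨?_, ?_⟩
  · apply Set.Subset.antisymm
    · intro x hx
      rw [hset] at hx
      obtain ⟨a, ha, rfl⟩ := qCone_image _ _ hx
      obtain ⟨j, hj, hmin⟩ := Finset.exists_min_image (Finset.univ.erase (0 : Fin (m + 2))) a
        ⟨1, by simp⟩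
      refine Set.mem_biUnion (x := j) (by simpa using hj) ?_
      have hx : ∑ α ∈ Finset.univ.erase 0, a α • castQ (v α) =
          a j • castQ (v 0) + ∑ α ∈ Finset.univ.erase 0, (a α - a j) • castQ (v α) := by
        rw [hsumQ, Finset.smul_sum, ← Finset.sum_add_distrib]
        refine Finset.sum_congr rfl fun α _ => ?_
        rw [← add_smul]; congr 1; ring
      rw [hx]
      refine qCone_add (qCone_smul (ha j) (qCone_gen (Set.mem_insert _ _))) (qCone_sum _ _ ?_)
      intro α hα
      by_cases h : α = j
      · subst h
        rw [sub_self, zero_smul]; exact qCone_zero' _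
      · exact qCone_smul (sub_nonneg.2 (hmin α hα)) (qCone_gen (Set.mem_insert_of_mem _
          ⟨α, ⟨Finset.ne_of_mem_erase hα, h⟩, rfl⟩))
    · refine Set.iUnion₂_subset fun j _ => qCone_sub (Set.insert_subset ?_ ?_)
      · rw [hsumQ]
        exact qCone_sum _ _ fun α hα => qCone_gen ⟨α, Finset.ne_of_mem_erase hα, rfl⟩
      · rintro _ ⟨α, hα, rfl⟩
        exact qCone_gen ⟨α, hα.1, rfl⟩
  · intro hU j hj
    have hZ := span_star (R := ℤ) v hsum j hj
    have hQ := span_star (R := ℚ) (fun α => castQ (v α)) hsumQ j hj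
    have hfun : (fun o : Option {α : Fin (m + 2) // α ≠ 0 ∧ α ≠ j} =>
          castQ (o.elim (v 0) (fun α => v (α : Fin (m + 2))))) =
        (fun o : Option {α : Fin (m + 2) // α ≠ 0 ∧ α ≠ j} =>
          o.elim (castQ (v 0)) (fun α => castQ (v (α : Fin (m + 2))))) := by
      funext o; cases o <;> rfl
    refine ⟨⟨?_, fun z => ?_⟩, hZ⟩
    · rw [hfun, linearIndependent_iff_card_eq_finrank_span, card_star j hj, Set.finrank, hQ]
      exact linearIndependent_iff_card_eq_finrank_span.1 hindep
    · rw [hZ, hfun, hQ]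
      exact hU.2 z
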